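/- arXiv:2510.27670 — 3 statements merged into one kernel-verified Lean document; each statement's English description precedes it below -/
import Mathlib

section
/- Let A₁, A₂, A₃ be hermitian 4×4 complex matrices whose joint numerical range W = W(A₁,A₂,A₃) has dimension 3. Suppose F is a face of W that is an elliptic disk, G is a rank-3 face of W, and F ≠ G. Then F ∩ G is a singleton {q}, where {q} is an exposed face of W; in particular {q} is an exposed face of G. -/
open Matrix ComplexOrder

noncomputable section

/-- A density matrix: positive semidefinite with unit trace. -/
def IsDensity {n : Type*} [Fintype n] (ρ : Matrix n n ℂ) : Prop :=
  ρ.PosSemidef ∧ ρ.trace = 1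

/-- The measurement map `ρ ↦ (tr ρA₁, …, tr ρA_k)` (the traces are real for
hermitian matrices). -/
def wpt {n : Type*} [Fintype n] {k : ℕ} (A : Fin k → Matrix n n ℂ)
    (ρ : Matrix n n ℂ) : Fin k → ℝ :=
  fun i => ((ρ * A i).trace).re

/-- The joint numerical range of `k` matrices. -/
def JNR {n : Type*} [Fintype n] {k : ℕ} (A : Fin k → Matrix n n ℂ) :
    Set (Fin k → ℝ) :=
  wpt A '' {ρ | IsDensity ρ}

/-- `F` is a face of the convex set `C`: a convex subset such that whenever an
open segment between two points of `C` meets `F`, both endpoints lie in `F`. -/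
def IsFaceOf {E : Type*} [AddCommGroup E] [Module ℝ E] (C F : Set E) : Prop :=
  Convex ℝ F ∧ IsExtreme ℝ C F

/-- The dimension of a convex set: the dimension of its affine hull. -/
def convDim {E : Type*} [AddCommGroup E] [Module ℝ E] (F : Set E) : ℕ :=
  Module.finrank ℝ (affineSpan ℝ F).direction

/-- Euclidean dot product on `Fin d → ℝ`. -/
def dotR {d : ℕ} (u v : Fin d → ℝ) : ℝ := ∑ i, u i * v i

/-- `F` is an exposed face of `C`: the set of minimizers of a linear functional. -/
def IsExposedFace {d : ℕ} (C F : Set (Fin d → ℝ)) : Prop :=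
  ∃ u : Fin d → ℝ, F = {x ∈ C | ∀ y ∈ C, dotR u x ≤ dotR u y}

/-- The normal cone of `C` at `p`. -/
def normalConeAt {d : ℕ} (C : Set (Fin d → ℝ)) (p : Fin d → ℝ) :
    Set (Fin d → ℝ) :=
  {u | ∀ y ∈ C, 0 ≤ dotR (y - p) u}

/-- `p` is a corner point of `C` if the normal cone of `C` at `p` spans `ℝ^d`. -/
def IsCornerPoint {d : ℕ} (C : Set (Fin d → ℝ)) (p : Fin d → ℝ) : Prop :=
  p ∈ C ∧ Submodule.span ℝ (normalConeAt C p) = ⊤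

/-- The closed unit disk of `ℝ²`. -/
def unitDisk2 : Set (Fin 2 → ℝ) := {v | v 0 ^ 2 + v 1 ^ 2 ≤ 1}

/-- An elliptic disk in `ℝ³`: the image of the closed unit disk of `ℝ²` under an
injective affine map. -/
def IsEllipticDisk (F : Set (Fin 3 → ℝ)) : Prop :=
  ∃ f : (Fin 2 → ℝ) →ᵃ[ℝ] (Fin 3 → ℝ), Function.Injective f ∧ F = f '' unitDisk2

/-- A non-elliptic face of `W`: a two-dimensional face that is not an elliptic
disk. -/
def IsNonEllipticFace (W F : Set (Fin 3 → ℝ)) : Prop :=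
  IsFaceOf W F ∧ convDim F = 2 ∧ ¬ IsEllipticDisk F

/-- A rank-3 face of the joint numerical range of `A`. -/
def IsRank3Face {k : ℕ} (A : Fin k → Matrix (Fin 4) (Fin 4) ℂ)
    (F : Set (Fin k → ℝ)) : Prop :=
  F.Nonempty ∧ IsFaceOf (JNR A) F ∧
    ∃ P : Matrix (Fin 4) (Fin 4) ℂ, Pᴴ = P ∧ P * P = P ∧ P.rank = 3 ∧
      ∀ ρ : Matrix (Fin 4) (Fin 4) ℂ, IsDensity ρ → (wpt A ρ ∈ F ↔ P * ρ * P = ρ)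

/-! Each nonempty face `F` of the joint numerical range is recorded by the subspace `S F` of the
vectors whose pure states are mapped into `F`: closure under addition is the parallelogram law
together with extremality of `F`. One has `F ⊆ G` if and only if `S F ≤ S G`. A rank-3 face `G` has a
hyperplane as its subspace, so every proper exposed face containing `G` equals `G`, and `G` is
exposed. If `F` has two points, then `S F` has dimension at least two and meets that hyperplane, so
`F ∩ G` is nonempty. A face of codimension at most one is exposed because dimensions increase
strictly along chains of faces, and for the same reason it is not contained in a different proper
face. Hence, for an elliptic disk `F`, the intersection `F ∩ G` is an exposed face of `W` and a
proper nonempty face of `F`, that is, a point. -/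

section Faces

variable {E : Type*} [AddCommGroup E] [Module ℝ E] {C D F G : Set E}

lemma IsFaceOf.refl (hC : Convex ℝ C) : IsFaceOf C C := ⟨hC, IsExtreme.rfl⟩

lemma IsFaceOf.inter (hF : IsFaceOf C F) (hG : IsFaceOf C G) : IsFaceOf C (F ∩ G) :=
  ⟨hF.1.inter hG.1, hF.2.inter hG.2⟩

lemma IsFaceOf.mono (hF : IsFaceOf C F) (hDC : D ⊆ C) (hFD : F ⊆ D) : IsFaceOf D F :=
  ⟨hF.1, hF.2.mono hDC hFD⟩

open scoped Pointwise in
lemma mem_smul_of_add_mem_smul (hF : IsExtreme ℝ C F) {a b : ℝ} (ha : 0 < a) (hb : 0 < b)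
    {x y : E} (hx : x ∈ a • C) (hy : y ∈ b • C) (hxy : x + y ∈ (a + b) • F) : x ∈ a • F := by
  obtain ⟨x, hx, rfl⟩ := hx
  obtain ⟨y, hy, rfl⟩ := hy
  obtain ⟨z, hz, hzxy⟩ := hxy
  have hab : 0 < a + b := add_pos ha hb
  refine Set.smul_mem_smul_set (hF.2 hx hy hz ⟨a / (a + b), b / (a + b), by positivity,
    by positivity, by field_simp, ?_⟩)
  rw [div_eq_inv_mul, div_eq_inv_mul, mul_smul, mul_smul, ← smul_add, ← hzxy,
    inv_smul_smul₀ hab.ne']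

end Faces

lemma exists_affineMap_retraction {k V P : Type*} [Field k] [AddCommGroup V] [Module k V]
    [AddTorsor V P] (S : AffineSubspace k P) (hS : (S : Set P).Nonempty) :
    ∃ r : P →ᵃ[k] P, (∀ x, r x ∈ S) ∧ ∀ x ∈ S, r x = x := by
  obtain ⟨p, hp⟩ := hS
  obtain ⟨π, hπ⟩ := S.direction.subtype.exists_leftInverse_of_injective S.direction.ker_subtype
  refine ⟨(AffineEquiv.vaddConst k p).toAffineMap.comp ((S.direction.subtype ∘ₗ π).toAffineMap.comp
    (AffineEquiv.vaddConst k p).symm.toAffineMap), fun x => ?_, fun x hx => ?_⟩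
  · exact AffineSubspace.vadd_mem_of_mem_direction (π (x -ᵥ p)).2 hp
  · have hπx : π (x -ᵥ p) = ⟨x -ᵥ p, AffineSubspace.vsub_mem_direction hx hp⟩ :=
      LinearMap.congr_fun hπ ⟨x -ᵥ p, AffineSubspace.vsub_mem_direction hx hp⟩
    change ((π (x -ᵥ p) : S.direction) : V) +ᵥ p = x
    rw [hπx, vsub_vadd]

section TopologicalVectorSpace

variable {E : Type*} [AddCommGroup E] [Module ℝ E] [TopologicalSpace E] {C D F : Set E} {p y : E}

lemma isFaceOf_of_isExposed (hC : Convex ℝ C) (hF : IsExposed ℝ C F) : IsFaceOf C F :=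
  ⟨hF.convex hC, hF.isExtreme⟩

variable [IsTopologicalAddGroup E] [ContinuousSMul ℝ E]

lemma exists_mem_openSegment_of_mem_intrinsicInterior (hp : p ∈ intrinsicInterior ℝ C)
    (hy : y ∈ affineSpan ℝ C) : ∃ z ∈ C, p ∈ openSegment ℝ y z := by
  obtain ⟨p, hp, rfl⟩ := hp
  let γ : ℝ → affineSpan ℝ C := fun t =>
    ⟨AffineMap.lineMap y (p : E) t, AffineMap.lineMap_mem t hy p.2⟩
  have hγ : Continuous γ := AffineMap.lineMap_continuous.subtype_mk _
  have hγ1 : γ 1 = p := Subtype.ext (AffineMap.lineMap_apply_one _ _)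
  have hev : ∀ᶠ t in nhdsWithin 1 (Set.Ioi 1), (γ t : E) ∈ C :=
    (hγ.tendsto 1).mono_left nhdsWithin_le_nhds |>.eventually
      (by rw [hγ1]; exact mem_interior_iff_mem_nhds.1 hp)
  obtain ⟨t, htC, ht⟩ := (hev.and self_mem_nhdsWithin).exists
  have ht0 : 0 < t := one_pos.trans ht
  refine ⟨_, htC, ?_⟩
  rw [openSegment_eq_image_lineMap]
  refine ⟨t⁻¹, ⟨inv_pos.2 ht0, inv_lt_one_of_one_lt₀ ht⟩, ?_⟩
  rw [AffineMap.lineMap_lineMap_right, inv_mul_cancel₀ ht0.ne', AffineMap.lineMap_apply_one]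

lemma mem_of_mem_intrinsicInterior (hF : IsExtreme ℝ C F) (hDC : D ⊆ C)
    (hpD : p ∈ intrinsicInterior ℝ D) (hpF : p ∈ F) (hyC : y ∈ C) (hyD : y ∈ affineSpan ℝ D) :
    y ∈ F := by
  obtain ⟨z, hz, hpz⟩ := exists_mem_openSegment_of_mem_intrinsicInterior hpD hyD
  exact hF.2 hyC (hDC hz) hpF hpz

end TopologicalVectorSpace

section FiniteDimensional

variable {E : Type*} [NormedAddCommGroup E] [NormedSpace ℝ E] [FiniteDimensional ℝ E]
  {C F : Set E} {p : E}

lemma IsFaceOf.convDim_lt (hF : IsFaceOf C F) (hne : F.Nonempty) (hFC : F ≠ C) :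
    convDim F < convDim C := by
  by_contra! hle
  have hspan : affineSpan ℝ F ≤ affineSpan ℝ C := affineSpan_mono ℝ hF.2.1
  have hdir : (affineSpan ℝ F).direction = (affineSpan ℝ C).direction :=
    Submodule.eq_of_le_of_finrank_le (AffineSubspace.direction_le hspan) hle
  have heq : affineSpan ℝ F = affineSpan ℝ C :=
    AffineSubspace.eq_of_direction_eq_of_nonempty_of_le hdir (hne.affineSpan ℝ) hspan
  obtain ⟨p, hp⟩ := hne.intrinsicInterior hF.1
  refine hFC (hF.2.1.antisymm fun y hy => ?_)
  exact mem_of_mem_intrinsicInterior hF.2 hF.2.1 hp (intrinsicInterior_subset hp) hy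
    (heq ▸ subset_affineSpan ℝ C hy)

-- Thickening `C` transversally to its affine span makes its relative interior an actual interior.
lemma exists_convex_superset_intrinsicInterior_eq (hC : Convex ℝ C) (hp : p ∈ C) :
    ∃ D, Convex ℝ D ∧ C ⊆ D ∧ intrinsicInterior ℝ C = interior D ∩ affineSpan ℝ C := by
  obtain ⟨r, hrS, hr⟩ := exists_affineMap_retraction _ ⟨p, subset_affineSpan ℝ C hp⟩
  have hr_cont : Continuous r := r.continuous_of_finiteDimensional
  refine ⟨r ⁻¹' C, hC.affine_preimage r,
    fun x hx => by rwa [Set.mem_preimage, hr x (subset_affineSpan ℝ C hx)], ?_⟩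
  refine Set.Subset.antisymm ?_ ?_
  · rintro _ ⟨x, hx, rfl⟩
    refine ⟨?_, x.2⟩
    let r' : E → affineSpan ℝ C := fun z => ⟨r z, hrS z⟩
    have hr' : Continuous r' := hr_cont.subtype_mk _
    have hr'x : r' x = x := Subtype.ext (hr x x.2)
    have hx' : (x : E) ∈ interior (r' ⁻¹' ((↑) ⁻¹' C)) :=
      preimage_interior_subset_interior_preimage hr' (by rwa [Set.mem_preimage, hr'x])
    exact hx'
  · rintro x ⟨hx, hxS⟩
    refine ⟨⟨x, hxS⟩, interior_mono (fun z hz => ?_)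
      (preimage_interior_subset_interior_preimage continuous_subtype_val hx), rfl⟩
    simpa only [Set.mem_preimage, hr z z.2] using hz

lemma exists_support_of_notMem_intrinsicInterior (hC : Convex ℝ C) (hp : p ∈ C)
    (hpi : p ∉ intrinsicInterior ℝ C) :
    ∃ l : StrongDual ℝ E, (∀ y ∈ C, l y ≤ l p) ∧ ∃ y ∈ C, l y < l p := by
  obtain ⟨D, hD, hCD, hint⟩ := exists_convex_superset_intrinsicInterior_eq hC hp
  have hpD : p ∉ interior D := fun h => hpi (hint ▸ ⟨h, subset_affineSpan ℝ C hp⟩)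
  obtain ⟨l, hl⟩ := geometric_hahn_banach_open_point hD.interior isOpen_interior hpD
  obtain ⟨q, hq⟩ := Set.Nonempty.intrinsicInterior hC ⟨p, hp⟩
  have hqD : q ∈ interior D := (hint ▸ hq).1
  refine ⟨l, fun y hy => ?_, q, intrinsicInterior_subset hq, hl q hqD⟩
  have hy_closure : y ∈ closure (interior D) := by
    rw [hD.closure_interior_eq_closure_of_nonempty_interior ⟨q, hqD⟩]
    exact subset_closure (hCD hy)
  exact closure_minimal (fun z hz => (hl z hz).le) (isClosed_le l.continuous continuous_const)
    hy_closure

lemma IsFaceOf.exists_isExposed_superset (hC : Convex ℝ C) (hF : IsFaceOf C F) (hne : F.Nonempty)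
    (hFC : F ≠ C) : ∃ G, IsExposed ℝ C G ∧ F ⊆ G ∧ G ≠ C := by
  obtain ⟨p, hp⟩ := hne.intrinsicInterior hF.1
  have hpF : p ∈ F := intrinsicInterior_subset hp
  have hpC : p ∉ intrinsicInterior ℝ C := fun h => hFC <| hF.2.1.antisymm fun y hy =>
    mem_of_mem_intrinsicInterior hF.2 subset_rfl h hpF hy (subset_affineSpan ℝ C hy)
  obtain ⟨l, hl, y, hy, hly⟩ := exists_support_of_notMem_intrinsicInterior hC (hF.2.1 hpF) hpC
  have hexp : IsExposed ℝ C (l.toExposed C) := ContinuousLinearMap.toExposed.isExposed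
  refine ⟨l.toExposed C, hexp, fun x hx => ?_, fun h => ?_⟩
  · exact mem_of_mem_intrinsicInterior hexp.isExtreme hF.2.1 hp ⟨hF.2.1 hpF, hl⟩ (hF.2.1 hx)
      (subset_affineSpan ℝ F hx)
  · exact hly.not_ge ((h.ge hy).2 p (hF.2.1 hpF))

lemma IsFaceOf.isExposed_of_finrank_le (hC : Convex ℝ C) (hF : IsFaceOf C F)
    (hdim : Module.finrank ℝ E ≤ convDim F + 1) : IsExposed ℝ C F := by
  obtain rfl | hne := F.eq_empty_or_nonempty
  · exact isExposed_empty
  by_cases hFC : F = C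
  · exact hFC ▸ IsExposed.refl F
  obtain ⟨G, hG, hFG, hGC⟩ := hF.exists_isExposed_superset hC hne hFC
  suffices F = G from this ▸ hG
  by_contra hne'
  have hlt : convDim F < convDim G := (hF.mono hG.subset hFG).convDim_lt hne hne'
  have hlt' : convDim G < convDim C :=
    (isFaceOf_of_isExposed hC hG).convDim_lt (hne.mono hFG) hGC
  have hle : convDim C ≤ Module.finrank ℝ E := Submodule.finrank_le _
  omega

end FiniteDimensional

lemma isExposedFace_of_isExposed {d : ℕ} {C F : Set (Fin d → ℝ)} (hF : IsExposed ℝ C F)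
    (hne : F.Nonempty) : IsExposedFace C F := by
  obtain ⟨l, rfl⟩ := hF hne
  obtain ⟨u, hu⟩ := (dotProductEquiv ℝ (Fin d)).surjective (-l.toLinearMap)
  have hdot : ∀ x, dotR u x = -l x := LinearMap.congr_fun hu
  exact ⟨u, by simp only [hdot, neg_le_neg_iff]⟩

section TrivialFaces

variable {E E' : Type*} [AddCommGroup E] [Module ℝ E] [AddCommGroup E'] [Module ℝ E']

lemma convDim_image (f : E →ᵃ[ℝ] E') (hf : Function.Injective f) (K : Set E) :
    convDim (f '' K) = convDim K := by
  rw [convDim, ← AffineSubspace.map_span, AffineSubspace.map_direction]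
  exact (Submodule.equivMapOfInjective f.linear (f.linear_injective_iff.2 hf) _).finrank_eq.symm

/-- Strict convexity of `C` relative to its affine hull, in terms of its faces: every face other
than `C` has at most one point. -/
def HasOnlyTrivialFaces (C : Set E) : Prop :=
  ∀ F, IsFaceOf C F → F.Subsingleton ∨ F = C

lemma HasOnlyTrivialFaces.image {K : Set E} (hK : HasOnlyTrivialFaces K) (f : E →ᵃ[ℝ] E')
    (hf : Function.Injective f) : HasOnlyTrivialFaces (f '' K) := by
  intro F hF
  have hface : IsFaceOf K (f ⁻¹' F) := by
    refine ⟨hF.1.affine_preimage f, fun x hx => ?_, fun x hx y hy z hz hzxy => ?_⟩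
    · exact (hf.mem_set_image).1 (hF.2.1 hx)
    · exact hF.2.2 (Set.mem_image_of_mem f hx) (Set.mem_image_of_mem f hy) hz
        (image_openSegment ℝ f x y ▸ Set.mem_image_of_mem f hzxy)
  have himage : f '' (f ⁻¹' F) = F :=
    Set.image_preimage_eq_of_subset (hF.2.1.trans (Set.image_subset_range f K))
  rw [← himage]
  exact (hK _ hface).imp (·.image f) (congrArg (f '' ·))

end TrivialFaces

lemma hasOnlyTrivialFaces_of_strictConvex {E : Type*} [AddCommGroup E] [Module ℝ E]
    [TopologicalSpace E] [IsTopologicalAddGroup E] [ContinuousSMul ℝ E] {K : Set E}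
    (hK : StrictConvex ℝ K) : HasOnlyTrivialFaces K := by
  intro F hF
  refine or_iff_not_imp_left.2 fun hns => hF.2.1.antisymm fun y hy => ?_
  obtain ⟨a, ha, b, hb, hab⟩ := Set.not_subsingleton_iff.1 hns
  have hmid : midpoint ℝ a b ∈ openSegment ℝ a b := midpoint_mem_openSegment a b
  exact mem_of_mem_intrinsicInterior hF.2 subset_rfl
    (interior_subset_intrinsicInterior (hK.openSegment_subset (hF.2.1 ha) (hF.2.1 hb) hab hmid))
    (hF.1.openSegment_subset ha hb hmid) hy (subset_affineSpan ℝ K hy)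

lemma strictConvex_unitDisk2 : StrictConvex ℝ unitDisk2 := by
  have hball : unitDisk2 = (WithLp.linearEquiv 2 ℝ (Fin 2 → ℝ)).symm ⁻¹' Metric.closedBall 0 1 := by
    ext v
    simp [unitDisk2, EuclideanSpace.norm_eq]
  rw [hball]
  exact (strictConvex_closedBall ℝ _ _).linear_preimage
    (WithLp.linearEquiv 2 ℝ (Fin 2 → ℝ)).symm.toLinearMap (PiLp.continuous_toLp 2 _)
    (LinearEquiv.injective _)

lemma nontrivial_unitDisk2 : unitDisk2.Nontrivial :=
  ⟨0, by simp [unitDisk2], ![1, 0], by simp [unitDisk2], fun h => by simpa using congrFun h 0⟩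

lemma interior_unitDisk2_nonempty : (interior unitDisk2).Nonempty := by
  obtain ⟨a, ha, b, hb, hab⟩ := nontrivial_unitDisk2
  exact ⟨_, strictConvex_unitDisk2.openSegment_subset ha hb hab (midpoint_mem_openSegment a b)⟩

lemma convDim_unitDisk2 : convDim unitDisk2 = 2 := by
  have hspan : affineSpan ℝ unitDisk2 = ⊤ :=
    strictConvex_unitDisk2.convex.interior_nonempty_iff_affineSpan_eq_top.1
      interior_unitDisk2_nonempty
  rw [convDim, hspan, AffineSubspace.direction_top, finrank_top, Module.finrank_fin_fun]

section FaceCone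

open scoped Pointwise

variable {n : Type*} [Fintype n] {d : ℕ} {A : Fin d → Matrix n n ℂ} {F G : Set (Fin d → ℝ)}
  {M N : Matrix n n ℂ}

lemma wpt_add (A : Fin d → Matrix n n ℂ) (M N : Matrix n n ℂ) :
    wpt A (M + N) = wpt A M + wpt A N := by
  ext i
  simp [wpt, Matrix.add_mul]

lemma wpt_smul (A : Fin d → Matrix n n ℂ) (c : ℝ) (M : Matrix n n ℂ) :
    wpt A (c • M) = c • wpt A M := by
  ext i
  simp [wpt]

lemma convex_JNR (A : Fin d → Matrix n n ℂ) : Convex ℝ (JNR A) := by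
  rintro _ ⟨ρ, hρ, rfl⟩ _ ⟨σ, hσ, rfl⟩ a b ha hb hab
  refine ⟨a • ρ + b • σ, ⟨(hρ.1.smul ha).add (hσ.1.smul hb), ?_⟩, ?_⟩
  · rw [trace_add, trace_smul, trace_smul, hρ.2, hσ.2, ← add_smul, hab, one_smul]
  · rw [wpt_add, wpt_smul, wpt_smul]

lemma trace_re_nonneg (hM : M.PosSemidef) : 0 ≤ M.trace.re :=
  (Complex.nonneg_iff.1 hM.trace_nonneg).1

lemma trace_re_pos (hM : M.PosSemidef) (h0 : M ≠ 0) : 0 < M.trace.re :=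
  (Complex.pos_iff.1 (hM.trace_nonneg.lt_of_ne' (mt hM.trace_eq_zero_iff.1 h0))).1

lemma isDensity_inv_trace_smul (hM : M.PosSemidef) (h0 : M ≠ 0) :
    IsDensity (M.trace.re⁻¹ • M) := by
  have hpos := trace_re_pos hM h0
  have him : M.trace.im = 0 := (Complex.nonneg_iff.1 hM.trace_nonneg).2.symm
  refine ⟨hM.smul (inv_nonneg.2 hpos.le), Complex.ext ?_ ?_⟩
  · simp [hpos.ne']
  · simp [him]

/-- The cone over a subset `F` of the joint numerical range: the positive semidefinite matrices
whose normalization is mapped into `F`. Working with the cone removes the normalization of the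
states from all computations; for nonempty `F` it contains `0`. -/
def faceCone (A : Fin d → Matrix n n ℂ) (F : Set (Fin d → ℝ)) : Set (Matrix n n ℂ) :=
  {M | M.PosSemidef ∧ wpt A M ∈ M.trace.re • F}

lemma mem_faceCone_iff_of_isDensity (hM : IsDensity M) : M ∈ faceCone A F ↔ wpt A M ∈ F := by
  simp [faceCone, hM.1, hM.2]

lemma zero_mem_faceCone (hF : F.Nonempty) : (0 : Matrix n n ℂ) ∈ faceCone A F := by
  refine ⟨.zero, ?_⟩
  rw [trace_zero, Complex.zero_re, Set.zero_smul_set hF, Set.mem_zero]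
  ext i
  simp [wpt]

lemma smul_mem_faceCone {c : ℝ} (hc : 0 ≤ c) (hM : M ∈ faceCone A F) : c • M ∈ faceCone A F := by
  refine ⟨hM.1.smul hc, ?_⟩
  rw [wpt_smul, trace_smul, Complex.smul_re, smul_assoc]
  exact Set.smul_mem_smul_set hM.2

lemma smul_mem_faceCone_iff {c : ℝ} (hc : 0 < c) : c • M ∈ faceCone A F ↔ M ∈ faceCone A F := by
  refine ⟨fun h => ?_, smul_mem_faceCone hc.le⟩
  rw [← inv_smul_smul₀ hc.ne' M]
  exact smul_mem_faceCone (inv_nonneg.2 hc.le) h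

lemma add_mem_faceCone (hF : Convex ℝ F) (hM : M ∈ faceCone A F) (hN : N ∈ faceCone A F) :
    M + N ∈ faceCone A F := by
  refine ⟨hM.1.add hN.1, ?_⟩
  rw [wpt_add, trace_add, Complex.add_re,
    hF.add_smul (trace_re_nonneg hM.1) (trace_re_nonneg hN.1)]
  exact Set.add_mem_add hM.2 hN.2

lemma sum_mem_faceCone {ι : Type*} (hF : Convex ℝ F) (hne : F.Nonempty) {s : Finset ι}
    {M : ι → Matrix n n ℂ} (hM : ∀ i ∈ s, M i ∈ faceCone A F) : ∑ i ∈ s, M i ∈ faceCone A F :=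
  Finset.sum_induction M (· ∈ faceCone A F) (fun _ _ => add_mem_faceCone hF)
    (zero_mem_faceCone hne) hM

lemma mem_faceCone_JNR (hM : M.PosSemidef) (h0 : M ≠ 0) : M ∈ faceCone A (JNR A) := by
  rw [← smul_mem_faceCone_iff (inv_pos.2 (trace_re_pos hM h0)),
    mem_faceCone_iff_of_isDensity (isDensity_inv_trace_smul hM h0)]
  exact ⟨_, isDensity_inv_trace_smul hM h0, rfl⟩

lemma mem_faceCone_of_add_mem (hF : IsExtreme ℝ (JNR A) F) (hne : F.Nonempty) (hM : M.PosSemidef)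
    (hN : N.PosSemidef) (h : M + N ∈ faceCone A F) : M ∈ faceCone A F := by
  by_cases hM0 : M = 0
  · exact hM0 ▸ zero_mem_faceCone hne
  by_cases hN0 : N = 0
  · rwa [hN0, add_zero] at h
  refine ⟨hM, mem_smul_of_add_mem_smul hF (trace_re_pos hM hM0) (trace_re_pos hN hN0)
    (mem_faceCone_JNR hM hM0).2 (mem_faceCone_JNR hN hN0).2 ?_⟩
  rw [← wpt_add, ← Complex.add_re, ← trace_add]
  exact h.2

lemma mem_faceCone_of_sum_mem {ι : Type*} (hF : IsExtreme ℝ (JNR A) F)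
    (hne : F.Nonempty) {s : Finset ι} {M : ι → Matrix n n ℂ} (hM : ∀ i ∈ s, (M i).PosSemidef)
    (h : ∑ i ∈ s, M i ∈ faceCone A F) {j : ι} (hj : j ∈ s) : M j ∈ faceCone A F := by
  classical
  rw [← Finset.add_sum_erase s M hj] at h
  exact mem_faceCone_of_add_mem hF hne (hM j hj)
    (posSemidef_sum _ fun i hi => hM i (Finset.mem_of_mem_erase hi)) h

end FaceCone

section FaceSubspace

variable {n : Type*} {d : ℕ}

lemma vecMulVec_smul_star_smul (c : ℂ) (x : n → ℂ) :
    vecMulVec (c • x) (star (c • x)) = (‖c‖ ^ 2) • vecMulVec x (star x) := by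
  rw [star_smul, vecMulVec_smul, smul_vecMulVec, smul_smul, Complex.star_def, Complex.conj_mul',
    ← Complex.ofReal_pow, Complex.coe_smul]

lemma vecMulVec_self_star_parallelogram (x y : n → ℂ) :
    vecMulVec (x + y) (star (x + y)) + vecMulVec (x - y) (star (x - y)) =
      (2 : ℝ) • (vecMulVec x (star x) + vecMulVec y (star y)) := by
  simp only [star_add, star_sub, add_vecMulVec, sub_vecMulVec, vecMulVec_add, vecMulVec_sub]
  module

variable [Fintype n] {A : Fin d → Matrix n n ℂ} {F G : Set (Fin d → ℝ)}

/-- The subspace of the vectors `x` whose pure state `x xᴴ`, up to normalization, is mapped into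
the nonempty face `F`. -/
def faceSubspace (hF : IsFaceOf (JNR A) F) (hne : F.Nonempty) : Submodule ℂ (n → ℂ) where
  carrier := {x | vecMulVec x (star x) ∈ faceCone A F}
  zero_mem' := by
    rw [Set.mem_ofPred_eq, zero_vecMulVec]
    exact zero_mem_faceCone hne
  smul_mem' c x hx := by
    rw [Set.mem_ofPred_eq, vecMulVec_smul_star_smul]
    exact smul_mem_faceCone (sq_nonneg _) hx
  add_mem' {x y} hx hy := by
    refine mem_faceCone_of_add_mem hF.2 hne (posSemidef_vecMulVec_self_star _)
      (posSemidef_vecMulVec_self_star (x - y)) ?_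
    rw [vecMulVec_self_star_parallelogram]
    exact smul_mem_faceCone zero_le_two (add_mem_faceCone hF.1 hx hy)

lemma mem_faceSubspace {hF : IsFaceOf (JNR A) F} {hne : F.Nonempty} {x : n → ℂ} :
    x ∈ faceSubspace hF hne ↔ vecMulVec x (star x) ∈ faceCone A F :=
  Iff.rfl

lemma faceSubspace_mono (hF : IsFaceOf (JNR A) F) (hneF : F.Nonempty) (hG : IsFaceOf (JNR A) G)
    (hneG : G.Nonempty) (h : F ⊆ G) : faceSubspace hF hneF ≤ faceSubspace hG hneG :=
  fun _ hx => ⟨hx.1, Set.smul_set_mono h hx.2⟩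

lemma exists_isDensity_eq_sum_of_mem (hF : IsFaceOf (JNR A) F) {p : Fin d → ℝ} (hp : p ∈ F) :
    ∃ (m : ℕ) (x : Fin m → n → ℂ), (∀ k, x k ∈ faceSubspace hF ⟨p, hp⟩) ∧
      IsDensity (∑ k, vecMulVec (x k) (star (x k))) ∧
      wpt A (∑ k, vecMulVec (x k) (star (x k))) = p := by
  obtain ⟨ρ, hρ, rfl⟩ := hF.2.1 hp
  obtain ⟨m, x, rfl⟩ := posSemidef_iff_eq_sum_vecMulVec.1 hρ.1
  refine ⟨m, x, fun k => ?_, hρ, rfl⟩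
  exact mem_faceCone_of_sum_mem hF.2 ⟨_, hp⟩ (M := fun k => vecMulVec (x k) (star (x k)))
    (fun i _ => posSemidef_vecMulVec_self_star (x i))
    ((mem_faceCone_iff_of_isDensity hρ).2 hp) (Finset.mem_univ k)

lemma subset_of_faceSubspace_le (hF : IsFaceOf (JNR A) F) (hneF : F.Nonempty)
    (hG : IsFaceOf (JNR A) G) (hneG : G.Nonempty)
    (h : faceSubspace hF hneF ≤ faceSubspace hG hneG) : F ⊆ G := by
  intro p hp
  obtain ⟨m, x, hx, hρ, rfl⟩ := exists_isDensity_eq_sum_of_mem hF hp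
  exact (mem_faceCone_iff_of_isDensity hρ).1 (sum_mem_faceCone hG.1 hneG fun k _ => h (hx k))

lemma inter_nonempty_of_faceSubspace_inf_ne_bot (hF : IsFaceOf (JNR A) F) (hneF : F.Nonempty)
    (hG : IsFaceOf (JNR A) G) (hneG : G.Nonempty)
    (h : faceSubspace hF hneF ⊓ faceSubspace hG hneG ≠ ⊥) : (F ∩ G).Nonempty := by
  obtain ⟨x, ⟨hxF, hxG⟩, hx0⟩ := Submodule.exists_mem_ne_zero_of_ne_bot h
  have hM := posSemidef_vecMulVec_self_star x
  have hM0 : vecMulVec x (star x) ≠ 0 := by simpa using hx0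
  have hρ := isDensity_inv_trace_smul hM hM0
  have hc : 0 < (vecMulVec x (star x)).trace.re⁻¹ := inv_pos.2 (trace_re_pos hM hM0)
  exact ⟨_, (mem_faceCone_iff_of_isDensity hρ).1 (smul_mem_faceCone hc.le hxF),
    (mem_faceCone_iff_of_isDensity hρ).1 (smul_mem_faceCone hc.le hxG)⟩

-- A one-dimensional `faceSubspace` carries a single pure state, hence a single density matrix.
lemma one_lt_finrank_faceSubspace (hF : IsFaceOf (JNR A) F) (hnt : F.Nontrivial) :
    1 < Module.finrank ℂ (faceSubspace hF hnt.nonempty) := by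
  by_contra! hle
  obtain ⟨v, hv⟩ := finrank_le_one_iff.1 hle
  have hsmul : ∀ p ∈ F, ∃ t : ℝ, IsDensity (t • vecMulVec v.1 (star v.1)) ∧
      wpt A (t • vecMulVec v.1 (star v.1)) = p := by
    intro p hp
    obtain ⟨m, x, hx, hρ, hpρ⟩ := exists_isDensity_eq_sum_of_mem hF hp
    choose c hc using fun k => hv ⟨x k, hx k⟩
    have hsum : ∑ k, vecMulVec (x k) (star (x k)) =
        (∑ k, ‖c k‖ ^ 2) • vecMulVec v.1 (star v.1) := by
      rw [Finset.sum_smul]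
      refine Finset.sum_congr rfl fun k _ => ?_
      rw [← vecMulVec_smul_star_smul, ← Submodule.coe_smul, hc k]
    exact ⟨_, hsum ▸ hρ, hsum ▸ hpρ⟩
  obtain ⟨p, hp, q, hq, hpq⟩ := hnt
  obtain ⟨s, hs, hsp⟩ := hsmul p hp
  obtain ⟨t, ht, htq⟩ := hsmul q hq
  have htrace : s • (vecMulVec v.1 (star v.1)).trace = t • (vecMulVec v.1 (star v.1)).trace := by
    rw [← trace_smul, ← trace_smul, hs.2, ht.2]
  have htrace0 : (vecMulVec v.1 (star v.1)).trace ≠ 0 := fun h0 => by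
    simpa [h0] using hs.2
  have hst : s = t := smul_left_injective ℝ htrace0 htrace
  exact hpq (hsp.symm.trans (hst ▸ htq))

end FaceSubspace

section CorankOne

variable {n : Type*} [Fintype n] {d : ℕ} {A : Fin d → Matrix n n ℂ} {F G : Set (Fin d → ℝ)}

/-- A face of the joint numerical range whose states are those supported on a hyperplane, given
as the range of an orthogonal projection; for `4 × 4` matrices these are the rank-3 faces. -/
def IsCorankOneFace (A : Fin d → Matrix n n ℂ) (F : Set (Fin d → ℝ)) : Prop :=
  F.Nonempty ∧ IsFaceOf (JNR A) F ∧
    ∃ P : Matrix n n ℂ, Pᴴ = P ∧ P * P = P ∧ P.rank + 1 = Fintype.card n ∧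
      ∀ ρ : Matrix n n ℂ, IsDensity ρ → (wpt A ρ ∈ F ↔ P * ρ * P = ρ)

lemma IsRank3Face.isCorankOneFace {A : Fin d → Matrix (Fin 4) (Fin 4) ℂ} (hF : IsRank3Face A F) :
    IsCorankOneFace A F := by
  obtain ⟨hne, hface, P, hP, hPP, hrank, hρ⟩ := hF
  exact ⟨hne, hface, P, hP, hPP, by rw [hrank, Fintype.card_fin], hρ⟩

lemma mul_vecMulVec_self_star_mul_eq_iff {P : Matrix n n ℂ} (hP : Pᴴ = P) (hPP : P * P = P)
    (x : n → ℂ) : P * vecMulVec x (star x) * P = vecMulVec x (star x) ↔ P *ᵥ x = x := by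
  have hsandwich : P * vecMulVec x (star x) * P = vecMulVec (P *ᵥ x) (star (P *ᵥ x)) := by
    rw [mul_vecMulVec, vecMulVec_mul, star_mulVec, hP]
  refine ⟨fun h => ?_, fun h => by rw [hsandwich, h]⟩
  have hleft : P * vecMulVec x (star x) = vecMulVec x (star x) := by
    rw [← h, ← Matrix.mul_assoc, ← Matrix.mul_assoc, hPP]
  have hzero : vecMulVec (P *ᵥ x - x) (star x) = 0 := by
    rw [sub_vecMulVec, ← mul_vecMulVec, hleft, sub_self]
  obtain h0 | h0 := vecMulVec_eq_zero.1 hzero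
  · exact sub_eq_zero.1 h0
  · rw [star_eq_zero.1 h0, mulVec_zero]

lemma faceSubspace_eq_range (hF : IsFaceOf (JNR A) F) (hne : F.Nonempty) {P : Matrix n n ℂ}
    (hP : Pᴴ = P) (hPP : P * P = P)
    (hρ : ∀ ρ : Matrix n n ℂ, IsDensity ρ → (wpt A ρ ∈ F ↔ P * ρ * P = ρ)) :
    faceSubspace hF hne = LinearMap.range P.mulVecLin := by
  have hfix : ∀ x, x ∈ LinearMap.range P.mulVecLin ↔ P *ᵥ x = x := fun x => by
    refine ⟨?_, fun h => ⟨x, h⟩⟩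
    rintro ⟨y, rfl⟩
    rw [mulVecLin_apply, mulVec_mulVec, hPP]
  ext x
  rw [hfix, mem_faceSubspace]
  obtain rfl | hx := eq_or_ne x 0
  · simpa using zero_mem_faceCone hne
  have hM := posSemidef_vecMulVec_self_star x
  have hM0 : vecMulVec x (star x) ≠ 0 := by simpa using hx
  have hc : 0 < (vecMulVec x (star x)).trace.re⁻¹ := inv_pos.2 (trace_re_pos hM hM0)
  have hd := isDensity_inv_trace_smul hM hM0
  rw [← smul_mem_faceCone_iff hc, mem_faceCone_iff_of_isDensity hd, hρ _ hd, Matrix.mul_smul,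
    Matrix.smul_mul, (smul_right_injective _ hc.ne').eq_iff,
    mul_vecMulVec_self_star_mul_eq_iff hP hPP]

namespace IsCorankOneFace

lemma isFaceOf (hG : IsCorankOneFace A G) : IsFaceOf (JNR A) G := hG.2.1

lemma finrank_faceSubspace_add_one (hG : IsCorankOneFace A G) :
    Module.finrank ℂ (faceSubspace hG.isFaceOf hG.1) + 1 = Fintype.card n := by
  obtain ⟨P, hP, hPP, hrank, hρ⟩ := hG.2.2
  rw [faceSubspace_eq_range _ _ hP hPP hρ]
  exact hrank

lemma ne_JNR (hG : IsCorankOneFace A G) : G ≠ JNR A := by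
  intro h
  have htop : faceSubspace hG.isFaceOf hG.1 = ⊤ := by
    refine Submodule.eq_top_iff'.2 fun x => ?_
    obtain rfl | hx := eq_or_ne x 0
    · exact zero_mem _
    rw [mem_faceSubspace, h]
    exact mem_faceCone_JNR (posSemidef_vecMulVec_self_star x)
      (by simpa using hx)
  have hfinrank := hG.finrank_faceSubspace_add_one
  rw [htop, finrank_top, Module.finrank_fintype_fun_eq_card] at hfinrank
  omega

lemma isExposed (hG : IsCorankOneFace A G) : IsExposed ℝ (JNR A) G := by
  obtain ⟨E, hE, hGE, hEW⟩ :=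
    hG.isFaceOf.exists_isExposed_superset (convex_JNR A) hG.1 hG.ne_JNR
  have hEface := isFaceOf_of_isExposed (convex_JNR A) hE
  have hEne : E.Nonempty := hG.1.mono hGE
  have hle := faceSubspace_mono hG.isFaceOf hG.1 hEface hEne hGE
  have htop : faceSubspace hEface hEne ≠ ⊤ := fun h =>
    hEW <| hE.subset.antisymm <| subset_of_faceSubspace_le (IsFaceOf.refl (convex_JNR A))
      (hEne.mono hE.subset) hEface hEne (h ▸ le_top)
  have hlt := Submodule.finrank_lt htop
  rw [Module.finrank_fintype_fun_eq_card, ← hG.finrank_faceSubspace_add_one,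
    Nat.lt_succ_iff] at hlt
  have heq := Submodule.eq_of_le_of_finrank_le hle hlt
  have hEG : E = G :=
    (subset_of_faceSubspace_le hEface hEne hG.isFaceOf hG.1 heq.ge).antisymm hGE
  exact hEG ▸ hE

lemma inter_nonempty (hG : IsCorankOneFace A G) (hF : IsFaceOf (JNR A) F) (hnt : F.Nontrivial) :
    (F ∩ G).Nonempty := by
  refine inter_nonempty_of_faceSubspace_inf_ne_bot hF hnt.nonempty hG.isFaceOf hG.1 fun h => ?_
  have hsum := Submodule.finrank_add_finrank_le_of_disjoint (disjoint_iff.2 h)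
  have htwo := one_lt_finrank_faceSubspace hF hnt
  have hhyperplane := hG.finrank_faceSubspace_add_one
  rw [Module.finrank_fintype_fun_eq_card] at hsum
  omega

end IsCorankOneFace

end CorankOne

theorem stmt10_general {n : Type*} [Fintype n] {d : ℕ} (A : Fin d → Matrix n n ℂ)
    (F G : Set (Fin d → ℝ)) (hF : IsFaceOf (JNR A) F) (hnt : F.Nontrivial)
    (hdim : d ≤ convDim F + 1) (hFtriv : HasOnlyTrivialFaces F) (hG : IsCorankOneFace A G)
    (hFG : F ≠ G) :
    ∃ q, F ∩ G = {q} ∧ IsExposedFace (JNR A) {q} ∧ IsExposedFace G {q} := by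
  have hdim' : Module.finrank ℝ (Fin d → ℝ) ≤ convDim F + 1 := by rwa [Module.finrank_fin_fun]
  have hF_not_subset : ¬ F ⊆ G := fun hsub => by
    have hFG_lt : convDim F < convDim G :=
      (hF.mono hG.isFaceOf.2.1 hsub).convDim_lt hnt.nonempty hFG
    have hGW_lt : convDim G < convDim (JNR A) := hG.isFaceOf.convDim_lt hG.1 hG.ne_JNR
    have hW_le : convDim (JNR A) ≤ Module.finrank ℝ (Fin d → ℝ) := Submodule.finrank_le _
    omega
  have hface : IsFaceOf F (F ∩ G) :=
    (hF.inter hG.isFaceOf).mono hF.2.1 Set.inter_subset_left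
  have hsub : (F ∩ G).Subsingleton :=
    (hFtriv _ hface).resolve_right (mt Set.inter_eq_left.1 hF_not_subset)
  obtain ⟨q, hq⟩ := hG.inter_nonempty hF hnt
  have hFGq : F ∩ G = {q} := hsub.eq_singleton_of_mem hq
  have hexp : IsExposed ℝ (JNR A) {q} :=
    hFGq ▸ (hF.isExposed_of_finrank_le (convex_JNR A) hdim').inter hG.isExposed
  exact ⟨q, hFGq, isExposedFace_of_isExposed hexp (Set.singleton_nonempty q),
    isExposedFace_of_isExposed (hexp.mono hG.isFaceOf.2.1 (Set.singleton_subset_iff.2 hq.2))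
      (Set.singleton_nonempty q)⟩

/-- an elliptic face and a different rank-3 face intersect in a
single point, which is an exposed face of `W` and of the rank-3 face. -/
theorem stmt10 (A : Fin 3 → Matrix (Fin 4) (Fin 4) ℂ)
    (hA : ∀ i, (A i).IsHermitian)
    (hdim : convDim (JNR A) = 3)
    (F G : Set (Fin 3 → ℝ))
    (hF : IsFaceOf (JNR A) F) (hFe : IsEllipticDisk F)
    (hG : IsRank3Face A G) (hFG : F ≠ G) :
    ∃ q, F ∩ G = {q} ∧ IsExposedFace (JNR A) {q} ∧ IsExposedFace G {q} := by
  obtain ⟨f, hf, rfl⟩ := hFe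
  exact stmt10_general A _ G hF (nontrivial_unitDisk2.image hf)
    (by rw [convDim_image f hf, convDim_unitDisk2])
    ((hasOnlyTrivialFaces_of_strictConvex strictConvex_unitDisk2).image f hf) hG.isCorankOneFace hFG
end
end

section
/- Let A₁,...,A_k be hermitian n×n complex matrices with n ≥ 2, and let p = (p₁,...,p_k) ∈ ℝ^k be a corner point of W = W(A₁,...,A_k). Then there exist a unitary matrix U ∈ M_n(ℂ) and hermitian (n−1)×(n−1) matrices B₁,...,B_k such that for each i, U Aᵢ U* is block diagonal with a 1×1 block equal to pᵢ and an (n−1)×(n−1) block equal to Bᵢ. In particular, there exists a nonzero vector φ ∈ ℂⁿ with Aᵢφ = pᵢφ for all i = 1,...,k (p lies in the joint spectrum). -/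
open Matrix ComplexOrder

noncomputable section

/-!
A normal vector `u` of `W` at `p` makes the hermitian matrix `H u = ∑ i, u i • (A i - p i)`
nonnegative against every density matrix, hence positive semidefinite. If the density matrix `ρ` is
mapped to `p`, then `tr (ρ * H u) = 0`, and positive semidefinite matrices whose product has trace
zero have product zero: `ρ * H u = 0`. This equation is linear in `u`, so at a corner point it holds
for every `u`, in particular for the coordinate vectors; adjoints then give `A i * ρ = p i • ρ`. The
nonzero vectors in the range of `ρ` are joint eigenvectors, and completing a normalized one to an
orthonormal basis splits off the block `p i`.
-/

section PosSemidef

variable {n R 𝕜 : Type*} [Fintype n] [CommSemiring R] [StarRing R] [RCLike 𝕜]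

lemma star_trace_mul_of_isHermitian {P Q : Matrix n n R} (hP : P.IsHermitian)
    (hQ : Q.IsHermitian) : star (P * Q).trace = (P * Q).trace := by
  rw [← trace_conjTranspose, conjTranspose_mul, hP.eq, hQ.eq, trace_mul_comm]

open scoped MatrixOrder in
lemma mul_eq_zero_of_trace_mul_eq_zero {P Q : Matrix n n 𝕜} (hP : P.PosSemidef)
    (hQ : Q.PosSemidef) (hPQ : (P * Q).trace = 0) : P * Q = 0 := by
  classical
  obtain ⟨C, rfl⟩ := CStarAlgebra.nonneg_iff_eq_star_mul_self.mp hP.nonneg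
  obtain ⟨D, rfl⟩ := CStarAlgebra.nonneg_iff_eq_star_mul_self.mp hQ.nonneg
  simp only [star_eq_conjTranspose] at hPQ ⊢
  have hCD : C * Dᴴ = 0 := by
    rw [← trace_conjTranspose_mul_self_eq_zero_iff, ← hPQ, conjTranspose_mul,
      conjTranspose_conjTranspose, Matrix.mul_assoc, trace_mul_comm]
    simp only [Matrix.mul_assoc]
  calc Cᴴ * C * (Dᴴ * D) = Cᴴ * (C * Dᴴ) * D := by simp only [Matrix.mul_assoc]
    _ = 0 := by rw [hCD, Matrix.mul_zero, Matrix.zero_mul]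

end PosSemidef

section Density

variable {n : Type*} [Fintype n]

lemma isDensity_inv_trace_smul_s15 {ρ : Matrix n n ℂ} (hρ : ρ.PosSemidef) (h0 : ρ ≠ 0) :
    IsDensity (ρ.trace⁻¹ • ρ) :=
  ⟨hρ.smul (inv_nonneg.mpr hρ.trace_nonneg), by
    rw [trace_smul, smul_eq_mul, inv_mul_cancel₀ (hρ.trace_eq_zero_iff.not.mpr h0)]⟩

lemma IsDensity.ne_zero {ρ : Matrix n n ℂ} (hρ : IsDensity ρ) : ρ ≠ 0 := by
  rintro rfl
  simpa using hρ.2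

lemma trace_mul_nonneg_of_forall_isDensity {H ρ : Matrix n n ℂ}
    (h : ∀ σ, IsDensity σ → 0 ≤ (σ * H).trace) (hρ : ρ.PosSemidef) : 0 ≤ (ρ * H).trace := by
  rcases eq_or_ne ρ 0 with rfl | h0
  · simp
  have hpos : 0 < ρ.trace :=
    hρ.trace_nonneg.lt_of_ne' (hρ.trace_eq_zero_iff.not.mpr h0)
  have hscaled := mul_nonneg hpos.le (h _ (isDensity_inv_trace_smul_s15 hρ h0))
  rwa [Matrix.smul_mul, trace_smul, smul_eq_mul, mul_inv_cancel_left₀ hpos.ne'] at hscaled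

lemma posSemidef_of_forall_isDensity {H : Matrix n n ℂ} (hH : H.IsHermitian)
    (h : ∀ σ, IsDensity σ → 0 ≤ (σ * H).trace) : H.PosSemidef := by
  refine .of_dotProduct_mulVec_nonneg hH fun x => ?_
  have hx := trace_mul_nonneg_of_forall_isDensity h (posSemidef_vecMulVec_self_star x)
  rwa [trace_mul_comm, mul_vecMulVec, trace_vecMulVec, dotProduct_comm] at hx

lemma coe_wpt {k : ℕ} {A : Fin k → Matrix n n ℂ} (hA : ∀ i, (A i).IsHermitian)
    {ρ : Matrix n n ℂ} (hρ : ρ.IsHermitian) (i : Fin k) :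
    (wpt A ρ i : ℂ) = (ρ * A i).trace :=
  Complex.conj_eq_iff_re.mp (star_trace_mul_of_isHermitian hρ (hA i))

end Density

section ShiftedPencil

variable {n : Type*} [DecidableEq n] {k : ℕ}

/-- The real linear pencil `u ↦ ∑ i, u i • (A i - p i)` of the matrices `A` shifted by `p`, which
represents the functional `x ↦ ⟨x - p, u⟩` on the joint numerical range of `A`. -/
def shiftedPencil (A : Fin k → Matrix n n ℂ) (p : Fin k → ℝ) :
    (Fin k → ℝ) →ₗ[ℝ] Matrix n n ℂ :=
  Fintype.linearCombination ℝ fun i => A i - (p i : ℂ) • 1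

lemma shiftedPencil_single (A : Fin k → Matrix n n ℂ) (p : Fin k → ℝ) (i : Fin k) :
    shiftedPencil A p (Pi.single i 1) = A i - (p i : ℂ) • 1 := by
  rw [shiftedPencil, Fintype.linearCombination_apply_single, one_smul]

lemma isHermitian_shiftedPencil {A : Fin k → Matrix n n ℂ} (hA : ∀ i, (A i).IsHermitian)
    (p u : Fin k → ℝ) : (shiftedPencil A p u).IsHermitian :=
  isSelfAdjoint_sum _ fun i _ => ((hA i).sub (isHermitian_one.smul (Complex.conj_ofReal _))).smul
    (IsSelfAdjoint.all (u i))

variable [Fintype n]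

lemma coe_dotR_wpt_sub {A : Fin k → Matrix n n ℂ} (hA : ∀ i, (A i).IsHermitian)
    (p u : Fin k → ℝ) {ρ : Matrix n n ℂ} (hρ : IsDensity ρ) :
    (dotR (wpt A ρ - p) u : ℂ) = (ρ * shiftedPencil A p u).trace := by
  have hterm (i : Fin k) :
      (((wpt A ρ - p) i * u i : ℝ) : ℂ) = (ρ * u i • (A i - (p i : ℂ) • 1)).trace := by
    rw [Matrix.mul_smul, trace_smul, Matrix.mul_sub, trace_sub, Matrix.mul_smul, Matrix.mul_one,
      trace_smul, hρ.2, Pi.sub_apply, Complex.real_smul, smul_eq_mul, mul_one]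
    push_cast
    rw [coe_wpt hA hρ.1.isHermitian, mul_comm]
  rw [dotR, Complex.ofReal_sum, shiftedPencil, Fintype.linearCombination_apply, Matrix.mul_sum,
    trace_sum]
  exact Finset.sum_congr rfl fun i _ => hterm i

lemma posSemidef_shiftedPencil {A : Fin k → Matrix n n ℂ} (hA : ∀ i, (A i).IsHermitian)
    {p u : Fin k → ℝ} (hu : u ∈ normalConeAt (JNR A) p) : (shiftedPencil A p u).PosSemidef := by
  refine posSemidef_of_forall_isDensity (isHermitian_shiftedPencil hA p u) fun σ hσ => ?_
  rw [← coe_dotR_wpt_sub hA p u hσ]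
  exact Complex.zero_le_real.mpr (hu _ ⟨σ, hσ, rfl⟩)

lemma mul_shiftedPencil_eq_zero {A : Fin k → Matrix n n ℂ} (hA : ∀ i, (A i).IsHermitian)
    {u : Fin k → ℝ} {ρ : Matrix n n ℂ} (hρ : IsDensity ρ)
    (hu : u ∈ normalConeAt (JNR A) (wpt A ρ)) : ρ * shiftedPencil A (wpt A ρ) u = 0 := by
  refine mul_eq_zero_of_trace_mul_eq_zero hρ.1 (posSemidef_shiftedPencil hA hu) ?_
  simp [← coe_dotR_wpt_sub hA _ u hρ, dotR]

end ShiftedPencil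

section CornerPoint

variable {n : Type*} [Fintype n] {k : ℕ}

lemma IsCornerPoint.mul_eq_smul {A : Fin k → Matrix n n ℂ} (hA : ∀ i, (A i).IsHermitian)
    {ρ : Matrix n n ℂ} (hp : IsCornerPoint (JNR A) (wpt A ρ)) (hρ : IsDensity ρ) (i : Fin k) :
    A i * ρ = (wpt A ρ i : ℂ) • ρ := by
  classical
  have hker : ⊤ ≤ LinearMap.ker (LinearMap.mulLeft ℝ ρ ∘ₗ shiftedPencil A (wpt A ρ)) :=
    hp.2 ▸ Submodule.span_le.mpr fun u hu => mul_shiftedPencil_eq_zero hA hρ hu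
  have hzero : ρ * (A i - (wpt A ρ i : ℂ) • 1) = 0 := by
    rw [← shiftedPencil_single]
    exact hker (Submodule.mem_top (x := Pi.single i 1))
  have hright : ρ * A i = (wpt A ρ i : ℂ) • ρ := by
    rwa [Matrix.mul_sub, Matrix.mul_smul, Matrix.mul_one, sub_eq_zero] at hzero
  simpa [(hA i).eq, hρ.1.isHermitian.eq] using congrArg conjTranspose hright

lemma IsCornerPoint.exists_joint_eigenvector {A : Fin k → Matrix n n ℂ}
    (hA : ∀ i, (A i).IsHermitian) {p : Fin k → ℝ} (hp : IsCornerPoint (JNR A) p) :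
    ∃ φ : n → ℂ, φ ≠ 0 ∧ ∀ i, A i *ᵥ φ = (p i : ℂ) • φ := by
  obtain ⟨ρ, hρ, rfl⟩ := hp.1
  classical
  obtain ⟨v, hv⟩ : ∃ v, ρ *ᵥ v ≠ 0 := by
    by_contra! h
    exact hρ.ne_zero (ext_of_mulVec_single fun j => by rw [h, zero_mulVec])
  exact ⟨ρ *ᵥ v, hv, fun i => by rw [mulVec_mulVec, hp.mul_eq_smul hA hρ, smul_mulVec]⟩

end CornerPoint

section BlockDecomposition

variable {n m ι κ R 𝕜 : Type*}

lemma eq_fromBlocks_of_toBlocks₂₁_eq_zero [AddMonoid R] [StarAddMonoid R]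
    {M : Matrix (ι ⊕ m) (ι ⊕ m) R} (hM : M.IsHermitian) (h : M.toBlocks₂₁ = 0) :
    M = fromBlocks M.toBlocks₁₁ 0 0 M.toBlocks₂₂ := by
  have h12 : M.toBlocks₁₂ = 0 := by
    rw [← fromBlocks_toBlocks M, isHermitian_fromBlocks_iff] at hM
    rw [← hM.2.2.1, h, conjTranspose_zero]
  conv_lhs => rw [← fromBlocks_toBlocks M, h, h12]

variable [DecidableEq n]

lemma eq_reindex_fromBlocks_of_col_eq_smul_single [DecidableEq ι] [NonAssocSemiring R]
    [StarRing R] (e : ι ⊕ m ≃ n) {M : Matrix n n R} (hM : M.IsHermitian) {c : R}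
    (hcol : ∀ a, M.col (e (.inl a)) = c • Pi.single (e (.inl a)) 1) :
    M = reindex e e (fromBlocks (c • 1) 0 0 (reindex e.symm e.symm M).toBlocks₂₂) := by
  have h11 : (reindex e.symm e.symm M).toBlocks₁₁ = c • 1 := by
    ext b a
    simpa [toBlocks₁₁, one_apply, Pi.single_apply] using congrFun (hcol a) (e (.inl b))
  have h21 : (reindex e.symm e.symm M).toBlocks₂₁ = 0 := by
    ext b a
    simpa [toBlocks₂₁, Pi.single_apply] using congrFun (hcol a) (e (.inr b))
  rw [← h11, ← eq_fromBlocks_of_toBlocks₂₁_eq_zero (hM.reindex e.symm) h21]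
  simp

variable [Fintype n]

lemma col_conjTranspose_mul_mul_eq_smul_single [CommRing R] [StarRing R] {A V : Matrix n n R}
    (hV : V ∈ unitaryGroup n R) {c : R} {j : n} (hj : A *ᵥ V.col j = c • V.col j) :
    (Vᴴ * A * V).col j = c • Pi.single j 1 := by
  rw [← mulVec_single_one] at hj ⊢
  rw [Matrix.mul_assoc, ← mulVec_mulVec, ← mulVec_mulVec, hj, mulVec_smul, mulVec_mulVec,
    ← star_eq_conjTranspose, mem_unitaryGroup_iff'.mp hV, one_mulVec]

variable [RCLike 𝕜]

lemma exists_mem_unitaryGroup_col_eq (j : n) {x : EuclideanSpace 𝕜 n} (hx : ‖x‖ = 1) :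
    ∃ V ∈ unitaryGroup n 𝕜, V.col j = x := by
  have hv : Orthonormal 𝕜 (({j} : Set n).domRestrict fun _ => x) :=
    ⟨fun _ => hx, fun i i' hne => absurd (Subsingleton.elim i i') hne⟩
  obtain ⟨b, hb⟩ := hv.exists_orthonormalBasis_extension_of_card_eq (by simp)
  refine ⟨_, (EuclideanSpace.basisFun n 𝕜).toMatrix_orthonormalBasis_mem_unitary b, ?_⟩
  ext i
  simp [Module.Basis.toMatrix_apply, hb j rfl]

lemma exists_unitary_conj_eq_fromBlocks [Unique ι] [DecidableEq ι] (e : ι ⊕ m ≃ n)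
    {A : κ → Matrix n n 𝕜} (hA : ∀ i, (A i).IsHermitian) {c : κ → 𝕜} {φ : n → 𝕜} (hφ : φ ≠ 0)
    (hAφ : ∀ i, A i *ᵥ φ = c i • φ) :
    ∃ U ∈ unitaryGroup n 𝕜, ∃ B : κ → Matrix m m 𝕜, (∀ i, (B i).IsHermitian) ∧
      ∀ i, U * A i * Uᴴ = reindex e e (fromBlocks (c i • (1 : Matrix ι ι 𝕜)) 0 0 (B i)) := by
  have hnorm := norm_smul_inv_norm (𝕜 := 𝕜) (x := WithLp.toLp 2 φ) (by simpa using hφ)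
  obtain ⟨V, hV, hVφ⟩ := exists_mem_unitaryGroup_col_eq (e (.inl default)) hnorm
  have hVcol (i : κ) : A i *ᵥ V.col (e (.inl default)) = c i • V.col (e (.inl default)) := by
    rw [hVφ, WithLp.ofLp_smul, mulVec_smul, hAφ, smul_comm]
  have hM (i : κ) : (Vᴴ * A i * V).IsHermitian := isHermitian_conjTranspose_mul_mul V (hA i)
  refine ⟨Vᴴ, Unitary.star_mem hV, fun i => (reindex e.symm e.symm (Vᴴ * A i * V)).toBlocks₂₂,
    fun i => ((hM i).reindex e.symm).submatrix .inr, fun i => ?_⟩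
  rw [conjTranspose_conjTranspose]
  refine eq_reindex_fromBlocks_of_col_eq_smul_single e (hM i) fun a => ?_
  rw [Unique.eq_default a]
  exact col_conjTranspose_mul_mul_eq_smul_single hV (hVcol i)

end BlockDecomposition

theorem stmt15_general {n m ι : Type*} [Fintype n] [DecidableEq n] [Unique ι] [DecidableEq ι]
    (e : ι ⊕ m ≃ n) {k : ℕ} (A : Fin k → Matrix n n ℂ) (hA : ∀ i, (A i).IsHermitian)
    (p : Fin k → ℝ) (hp : IsCornerPoint (JNR A) p) :
    (∃ U : Matrix n n ℂ, Uᴴ * U = 1 ∧ U * Uᴴ = 1 ∧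
      ∃ B : Fin k → Matrix m m ℂ, (∀ i, (B i).IsHermitian) ∧
        ∀ i, U * A i * Uᴴ =
          reindex e e (fromBlocks ((p i : ℂ) • (1 : Matrix ι ι ℂ)) 0 0 (B i))) ∧
    ∃ φ : n → ℂ, φ ≠ 0 ∧ ∀ i, A i *ᵥ φ = (p i : ℂ) • φ := by
  obtain ⟨φ, hφ, hAφ⟩ := hp.exists_joint_eigenvector hA
  obtain ⟨U, hU, hB⟩ := exists_unitary_conj_eq_fromBlocks e hA hφ hAφ
  exact ⟨⟨U, mem_unitaryGroup_iff'.mp hU, mem_unitaryGroup_iff.mp hU, hB⟩, φ, hφ, hAφ⟩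

/-- a corner point `p` of `W` lies in the joint spectrum: the
matrices are simultaneously unitarily similar to block diagonal matrices with a
`1×1` block `pᵢ`, and there is a common eigenvector for the eigenvalues `pᵢ`. -/
theorem stmt15 {n k : ℕ} (hn : 2 ≤ n)
    (A : Fin k → Matrix (Fin n) (Fin n) ℂ)
    (hA : ∀ i, (A i).IsHermitian)
    (p : Fin k → ℝ) (hp : IsCornerPoint (JNR A) p) :
    (∃ U : Matrix (Fin n) (Fin n) ℂ, Uᴴ * U = 1 ∧ U * Uᴴ = 1 ∧
      ∃ B : Fin k → Matrix (Fin (n - 1)) (Fin (n - 1)) ℂ,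
        (∀ i, (B i).IsHermitian) ∧
        ∀ i, U * A i * Uᴴ =
          Matrix.reindex (finSumFinEquiv.trans (finCongr (by omega)))
            (finSumFinEquiv.trans (finCongr (by omega)))
            (Matrix.fromBlocks
              ((p i : ℂ) • (1 : Matrix (Fin 1) (Fin 1) ℂ)) 0 0 (B i))) ∧
    ∃ φ : Fin n → ℂ, φ ≠ 0 ∧ ∀ i, (A i) *ᵥ φ = (p i : ℂ) • φ := by
  exact stmt15_general (finSumFinEquiv.trans (finCongr (by omega))) A hA p hp
end
end

section
/- Let A₁,...,A_k be hermitian n×n complex matrices. For every nonempty face F of W(A₁,...,A_k) there exist a natural number r with 1 ≤ r ≤ n and hermitian r×r complex matrices B₁,...,B_k such that F = W(B₁,...,B_k); that is, every nonempty face of a joint numerical range is itself the joint numerical range of k hermitian matrices of size at most n. -/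
open Matrix ComplexOrder

noncomputable section

/-!
The set `G` of density matrices measured into the face `F` is a face of the set of all density
matrices. Choose `ρ ∈ G` with minimal kernel and an isometry `V` onto the range of `ρ`. Averaging
with `ρ` shows that every element of `G` is supported on the range of `ρ`. Conversely, a density
matrix `σ` supported there satisfies `t • σ ≤ ρ` for some `t ∈ (0, 1)`, so `ρ` is a proper convex
combination of `σ` and another density matrix, and `σ ∈ G` because `G` is a face. Hence `G`
consists of the matrices `V * τ * Vᴴ` with `τ` a density matrix, and since
`tr (V * τ * Vᴴ * A) = tr (τ * (Vᴴ * A * V))`, `F` is the joint numerical range of the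
compressions `Vᴴ * A i * V`.
-/

section CStarAlgebra

variable {R : Type*} [CStarAlgebra R] [PartialOrder R] [StarOrderedRing R]

lemma exists_smul_le_of_isStrictlyPositive {a b : R} (ha : IsStrictlyPositive a)
    (hb : IsSelfAdjoint b) : ∃ t ∈ Set.Ioo (0 : ℝ) 1, t • b ≤ a := by
  nontriviality R using exists_between
  obtain ⟨c, hc, hca⟩ : ∃ c > 0, algebraMap ℝ R c ≤ a :=
    (CFC.exists_pos_algebraMap_le_iff ha.isSelfAdjoint).2 fun x hx ↦ ha.spectrum_pos hx
  obtain ⟨t, ht, htc⟩ : ∃ t ∈ Set.Ioo (0 : ℝ) 1, t * ‖b‖ ≤ c := by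
    have hpos : 0 < ‖b‖ + c + 1 := by positivity
    refine ⟨c / (‖b‖ + c + 1), ⟨by positivity, (div_lt_one hpos).2 ?_⟩, ?_⟩
    · linarith [norm_nonneg b]
    · rw [div_mul_eq_mul_div, div_le_iff₀ hpos]
      nlinarith
  refine ⟨t, ht, ?_⟩
  calc t • b ≤ t • algebraMap ℝ R ‖b‖ :=
        smul_le_smul_of_nonneg_left hb.le_algebraMap_norm_self ht.1.le
    _ = algebraMap ℝ R (t * ‖b‖) := by rw [map_mul, Algebra.smul_def]
    _ ≤ algebraMap ℝ R c := algebraMap_mono R htc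
    _ ≤ a := hca

end CStarAlgebra

section RCLike

variable {𝕜 m n p : Type*} [RCLike 𝕜] [Fintype n] [Fintype p]

lemma exists_eq_mul_of_range_mulVecLin_le {A : Matrix m n 𝕜} {B : Matrix m p 𝕜}
    (h : LinearMap.range A.mulVecLin ≤ LinearMap.range B.mulVecLin) :
    ∃ C : Matrix p n 𝕜, A = B * C := by
  classical
  choose c hc using fun j ↦ h ⟨Pi.single j 1, rfl⟩
  refine ⟨of fun i j ↦ c j i, ext_of_mulVec_single fun j ↦ ?_⟩
  rw [← mulVec_mulVec, mulVec_single_one (of _)]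
  exact (hc j).symm

lemma exists_isometry_range_eq (S : Submodule 𝕜 (n → 𝕜)) :
    ∃ V : Matrix n (Fin (Module.finrank 𝕜 S)) 𝕜,
      Vᴴ * V = 1 ∧ LinearMap.range V.mulVecLin = S := by
  let e := WithLp.linearEquiv 2 𝕜 (n → 𝕜)
  let b := (stdOrthonormalBasis 𝕜 (S.map e.symm.toLinearMap)).reindex
    (finCongr (e.symm.finrank_map_eq S))
  refine ⟨of fun i j ↦ (b j).1 i, ?_, ?_⟩
  · ext i j
    simpa [mul_apply, one_apply, PiLp.inner_apply, mul_comm] using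
      orthonormal_iff_ite.1 b.orthonormal i j
  · have hcol : (of fun i j ↦ (b j).1 i : Matrix n _ 𝕜).col =
        e ∘ (S.map e.symm.toLinearMap).subtype ∘ b := rfl
    have hspan : Submodule.span 𝕜 (Set.range b) = ⊤ := by
      rw [← b.coe_toBasis, b.toBasis.span_eq]
    rw [range_mulVecLin, hcol, Set.range_comp, Set.range_comp, ← LinearEquiv.coe_coe,
      Submodule.span_image, Submodule.span_image, hspan, Submodule.map_subtype_top,
      ← Submodule.map_comp]
    simp

lemma mul_mul_conjTranspose_eq_self_of_range_le [DecidableEq p] {A : Matrix n n 𝕜}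
    {V : Matrix n p 𝕜} (hA : A.IsHermitian) (hV : Vᴴ * V = 1)
    (h : LinearMap.range A.mulVecLin ≤ LinearMap.range V.mulVecLin) : A * (V * Vᴴ) = A := by
  obtain ⟨C, hC⟩ := exists_eq_mul_of_range_mulVecLin_le h
  have hA' : A = Cᴴ * Vᴴ := by rw [← conjTranspose_mul, ← hC, hA.eq]
  rw [hA', Matrix.mul_assoc, ← Matrix.mul_assoc Vᴴ, hV, Matrix.one_mul]

lemma mul_compression_mul_conjTranspose_eq_self {A : Matrix n n 𝕜} {V : Matrix n p 𝕜}
    (hA : A.IsHermitian) (h : A * (V * Vᴴ) = A) : V * (Vᴴ * A * V) * Vᴴ = A := by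
  have h' : V * Vᴴ * A = A := by
    simpa [hA.eq] using congrArg conjTranspose h
  calc V * (Vᴴ * A * V) * Vᴴ = V * Vᴴ * (A * (V * Vᴴ)) := by simp only [Matrix.mul_assoc]
    _ = A := by rw [h, h']

lemma mul_eq_self_of_ker_mulVecLin_le {A B : Matrix m n 𝕜} {P : Matrix n n 𝕜}
    (h : LinearMap.ker A.mulVecLin ≤ LinearMap.ker B.mulVecLin) (hA : A * P = A) :
    B * P = B := by
  refine ext_iff_mulVec.2 fun x ↦ ?_
  have hx : P *ᵥ x - x ∈ LinearMap.ker A.mulVecLin := by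
    simp [mulVec_sub, hA]
  simpa [mulVec_sub, sub_eq_zero] using h hx

lemma ker_mulVecLin_add_of_posSemidef {A B : Matrix n n 𝕜} (hA : A.PosSemidef)
    (hB : B.PosSemidef) :
    LinearMap.ker (A + B).mulVecLin =
      LinearMap.ker A.mulVecLin ⊓ LinearMap.ker B.mulVecLin := by
  ext x
  simp only [LinearMap.mem_ker, Submodule.mem_inf, mulVecLin_apply]
  rw [← hA.dotProduct_mulVec_zero_iff, ← hB.dotProduct_mulVec_zero_iff,
    ← (hA.add hB).dotProduct_mulVec_zero_iff, add_mulVec, dotProduct_add,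
    add_eq_zero_iff_of_nonneg (hA.dotProduct_mulVec_nonneg x) (hB.dotProduct_mulVec_nonneg x)]

lemma exists_ker_mulVecLin_le_of_convex {G : Set (Matrix n n 𝕜)} (hG : Convex ℝ G)
    (hne : G.Nonempty) (hpos : ∀ A ∈ G, A.PosSemidef) :
    ∃ A ∈ G, ∀ B ∈ G, LinearMap.ker A.mulVecLin ≤ LinearMap.ker B.mulVecLin := by
  obtain ⟨A, hA, hmin⟩ := exists_minimalFor_of_wellFoundedLT (· ∈ G)
    (fun A ↦ LinearMap.ker A.mulVecLin) hne
  refine ⟨A, hA, fun B hB ↦ ?_⟩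
  have hker : LinearMap.ker (midpoint ℝ A B).mulVecLin =
      LinearMap.ker A.mulVecLin ⊓ LinearMap.ker B.mulVecLin := by
    rw [← ker_mulVecLin_add_of_posSemidef (hpos A hA) (hpos B hB), midpoint_eq_smul_add]
    ext x
    simp only [LinearMap.mem_ker, mulVecLin_apply, smul_mulVec, invOf_eq_inv, smul_eq_zero,
      inv_eq_zero, OfNat.ofNat_ne_zero, false_or]
  have hle := hmin (hG.midpoint_mem hA hB) (hker.trans_le inf_le_left)
  exact hle.trans (hker.trans_le inf_le_right)

lemma posDef_conjTranspose_mul_mul_of_range_eq [DecidableEq p] {A : Matrix n n 𝕜}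
    {V : Matrix n p 𝕜} (hA : A.PosSemidef) (hV : Vᴴ * V = 1)
    (hrange : LinearMap.range V.mulVecLin = LinearMap.range A.mulVecLin) :
    (Vᴴ * A * V).PosDef := by
  obtain ⟨W, hW⟩ := exists_eq_mul_of_range_mulVecLin_le hrange.le
  have hinv : Vᴴ * A * V * (Vᴴ * W) = 1 :=
    calc Vᴴ * A * V * (Vᴴ * W) = Vᴴ * (A * (V * Vᴴ)) * W := by simp only [Matrix.mul_assoc]
      _ = Vᴴ * A * W := by
        rw [mul_mul_conjTranspose_eq_self_of_range_le hA.isHermitian hV hrange.ge]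
      _ = 1 := by rw [Matrix.mul_assoc, ← hW, hV]
  exact (hA.conjTranspose_mul_mul_same V).posDef_iff_isUnit.2 (.of_mul_eq_one _ hinv)

end RCLike

open scoped MatrixOrder Matrix.Norms.L2Operator in
lemma exists_posSemidef_sub_smul_of_posDef {n : Type*} [Finite n] {A B : Matrix n n ℂ}
    (hA : A.PosDef) (hB : B.IsHermitian) : ∃ t ∈ Set.Ioo (0 : ℝ) 1, (A - t • B).PosSemidef := by
  classical
  have := Fintype.ofFinite n
  exact exists_smul_le_of_isStrictlyPositive hA.isStrictlyPositive hB.isSelfAdjoint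

section IsDensity

variable {n p : Type*} [Fintype n] [Fintype p]

lemma convex_setOf_isDensity : Convex ℝ {ρ : Matrix n n ℂ | IsDensity ρ} := by
  intro ρ hρ σ hσ a b ha hb hab
  refine ⟨(hρ.1.smul ha).add (hσ.1.smul hb), ?_⟩
  rw [trace_add, trace_smul, trace_smul, hρ.2, hσ.2, ← add_smul, hab, one_smul]

lemma IsDensity.nonempty {ρ : Matrix n n ℂ} (hρ : IsDensity ρ) : Nonempty n := by
  by_contra! h
  simpa [Matrix.trace] using hρ.2

lemma IsDensity.exists_mem_openSegment {ρ σ : Matrix n n ℂ} (hρ : IsDensity ρ) (hσ : IsDensity σ)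
    {t : ℝ} (ht : t ∈ Set.Ioo (0 : ℝ) 1) (h : (ρ - t • σ).PosSemidef) :
    ∃ ω, IsDensity ω ∧ ρ ∈ openSegment ℝ σ ω := by
  have ht' : 0 < 1 - t := sub_pos.2 ht.2
  refine ⟨(1 - t)⁻¹ • (ρ - t • σ), ⟨h.smul (inv_nonneg.2 ht'.le), ?_⟩,
    t, 1 - t, ht.1, ht', by ring, ?_⟩
  · rw [trace_smul, trace_sub, trace_smul, hρ.2, hσ.2, ← one_smul ℝ (1 : ℂ), smul_smul, mul_one,
      ← sub_smul, smul_smul, inv_mul_cancel₀ ht'.ne']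
  · rw [smul_inv_smul₀ ht'.ne', add_sub_cancel]

variable [DecidableEq p]

lemma trace_isometry_mul_mul_conjTranspose {V : Matrix n p ℂ} (hV : Vᴴ * V = 1)
    (τ : Matrix p p ℂ) : (V * τ * Vᴴ).trace = τ.trace := by
  rw [trace_mul_comm, ← Matrix.mul_assoc, hV, Matrix.one_mul]

lemma IsDensity.isometry_mul_mul_conjTranspose {V : Matrix n p ℂ} (hV : Vᴴ * V = 1)
    {τ : Matrix p p ℂ} (hτ : IsDensity τ) : IsDensity (V * τ * Vᴴ) :=
  ⟨hτ.1.mul_mul_conjTranspose_same V, (trace_isometry_mul_mul_conjTranspose hV τ).trans hτ.2⟩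

lemma IsDensity.mem_image_isometry {V : Matrix n p ℂ} (hV : Vᴴ * V = 1) {σ : Matrix n n ℂ}
    (hσ : IsDensity σ) (h : σ * (V * Vᴴ) = σ) :
    σ ∈ (fun τ : Matrix p p ℂ ↦ V * τ * Vᴴ) '' {τ | IsDensity τ} := by
  have hcompress := mul_compression_mul_conjTranspose_eq_self hσ.1.isHermitian h
  refine ⟨Vᴴ * σ * V, ⟨hσ.1.conjTranspose_mul_mul_same V, ?_⟩, hcompress⟩
  rw [← trace_isometry_mul_mul_conjTranspose hV, hcompress, hσ.2]

end IsDensity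

section IsFaceOf

variable {n : Type*} [Fintype n]

lemma IsFaceOf.inter_preimage {E E' : Type*} [AddCommGroup E] [Module ℝ E] [AddCommGroup E']
    [Module ℝ E'] {f : E →ᵃ[ℝ] E'} {C : Set E} {F : Set E'} (hC : Convex ℝ C)
    (hF : IsFaceOf (f '' C) F) : IsFaceOf C (C ∩ f ⁻¹' F) := by
  refine ⟨hC.inter (hF.1.affine_preimage f), Set.inter_subset_left, ?_⟩
  intro x hx y hy z hz hzxy
  refine ⟨hx, hF.2.left_mem_of_mem_openSegment (Set.mem_image_of_mem f hx)
    (Set.mem_image_of_mem f hy) hz.2 ?_⟩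
  rw [← image_openSegment ℝ f]
  exact Set.mem_image_of_mem f hzxy

lemma image_isometry_subset_of_isExtreme {p : Type*} [Fintype p] [DecidableEq p]
    {G : Set (Matrix n n ℂ)} (hG : IsExtreme ℝ {ρ | IsDensity ρ} G) {ρ : Matrix n n ℂ}
    (hρG : ρ ∈ G) {V : Matrix n p ℂ} (hV : Vᴴ * V = 1)
    (hrange : LinearMap.range V.mulVecLin = LinearMap.range ρ.mulVecLin) :
    (fun τ : Matrix p p ℂ ↦ V * τ * Vᴴ) '' {τ | IsDensity τ} ⊆ G := by
  rintro _ ⟨τ, hτ, rfl⟩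
  have hρ : IsDensity ρ := hG.subset hρG
  have hcompress : V * (Vᴴ * ρ * V) * Vᴴ = ρ :=
    mul_compression_mul_conjTranspose_eq_self hρ.1.isHermitian
      (mul_mul_conjTranspose_eq_self_of_range_le hρ.1.isHermitian hV hrange.ge)
  obtain ⟨t, ht, hpos⟩ := exists_posSemidef_sub_smul_of_posDef
    (posDef_conjTranspose_mul_mul_of_range_eq hρ.1 hV hrange) hτ.1.isHermitian
  have hle : (ρ - t • (V * τ * Vᴴ)).PosSemidef := by
    simpa [Matrix.mul_sub, Matrix.sub_mul, hcompress] using hpos.mul_mul_conjTranspose_same V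
  have hσ := hτ.isometry_mul_mul_conjTranspose hV
  obtain ⟨ω, hω, hmem⟩ := hρ.exists_mem_openSegment hσ ht hle
  exact hG.left_mem_of_mem_openSegment hσ hω hρG hmem

theorem IsFaceOf.exists_eq_image_isometry {G : Set (Matrix n n ℂ)}
    (hG : IsFaceOf {ρ | IsDensity ρ} G) (hne : G.Nonempty) :
    ∃ r ≤ Fintype.card n, ∃ V : Matrix n (Fin r) ℂ, Vᴴ * V = 1 ∧
      G = (fun τ : Matrix (Fin r) (Fin r) ℂ ↦ V * τ * Vᴴ) '' {τ | IsDensity τ} := by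
  obtain ⟨ρ, hρG, hker⟩ := exists_ker_mulVecLin_le_of_convex hG.1 hne
    fun σ hσ ↦ (hG.2.subset hσ).1
  obtain ⟨V, hV, hrange⟩ := exists_isometry_range_eq (LinearMap.range ρ.mulVecLin)
  refine ⟨_, ρ.rank_le_card_height, V, hV, Set.Subset.antisymm (fun σ hσ ↦ ?_)
    (image_isometry_subset_of_isExtreme hG.2 hρG hV hrange)⟩
  have hρV : ρ * (V * Vᴴ) = ρ :=
    mul_mul_conjTranspose_eq_self_of_range_le (hG.2.subset hρG).1.isHermitian hV hrange.ge
  exact (hG.2.subset hσ).mem_image_isometry hV (mul_eq_self_of_ker_mulVecLin_le (hker σ hσ) hρV)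

end IsFaceOf

section JNR

variable {n p : Type*} [Fintype n] [Fintype p] {k : ℕ}

/-- The measurement map `wpt A` as a real-linear map, so that faces of the joint numerical range
pull back along it to faces of the set of density matrices. -/
def wptLinearMap (A : Fin k → Matrix n n ℂ) : Matrix n n ℂ →ₗ[ℝ] (Fin k → ℝ) where
  toFun := wpt A
  map_add' ρ σ := by ext i; simp [wpt, Matrix.add_mul]
  map_smul' c ρ := by ext i; simp [wpt]

lemma wpt_mul_mul_conjTranspose (A : Fin k → Matrix n n ℂ) (V : Matrix n p ℂ)
    (τ : Matrix p p ℂ) : wpt A (V * τ * Vᴴ) = wpt (fun i ↦ Vᴴ * A i * V) τ := by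
  ext i
  simp only [wpt]
  rw [Matrix.mul_assoc, Matrix.mul_assoc, trace_mul_comm]
  simp only [Matrix.mul_assoc]

lemma JNR_conjTranspose_mul_mul (A : Fin k → Matrix n n ℂ) (V : Matrix n p ℂ) :
    JNR (fun i ↦ Vᴴ * A i * V) =
      wpt A '' ((fun τ : Matrix p p ℂ ↦ V * τ * Vᴴ) '' {τ | IsDensity τ}) := by
  simp only [JNR, Set.image_image, wpt_mul_mul_conjTranspose]

theorem stmt17_general (A : Fin k → Matrix n n ℂ) (F : Set (Fin k → ℝ)) (hF : IsFaceOf (JNR A) F)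
    (hFne : F.Nonempty) :
    ∃ r : ℕ, 1 ≤ r ∧ r ≤ Fintype.card n ∧
      ∃ V : Matrix n (Fin r) ℂ, Vᴴ * V = 1 ∧ F = JNR fun i ↦ Vᴴ * A i * V := by
  have hG : IsFaceOf {ρ | IsDensity ρ} ({ρ | IsDensity ρ} ∩ wpt A ⁻¹' F) :=
    hF.inter_preimage (f := (wptLinearMap A).toAffineMap) convex_setOf_isDensity
  have himage : wpt A '' ({ρ | IsDensity ρ} ∩ wpt A ⁻¹' F) = F := by
    rw [Set.image_inter_preimage]
    exact Set.inter_eq_right.2 hF.2.subset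
  obtain ⟨r, hr, V, hV, hGV⟩ :=
    hG.exists_eq_image_isometry (Set.image_nonempty.1 (himage.symm ▸ hFne))
  have hFV : F = JNR fun i ↦ Vᴴ * A i * V := by
    rw [JNR_conjTranspose_mul_mul, ← hGV, himage]
  obtain ⟨-, τ, hτ, -⟩ := hFV ▸ hFne
  exact ⟨r, Fin.pos_iff_nonempty.2 hτ.nonempty, hr, V, hV, hFV⟩

end JNR

/-- every nonempty face of a joint numerical range is itself the
joint numerical range of `k` hermitian matrices of size at most `n`. -/
theorem stmt17 {n k : ℕ} (A : Fin k → Matrix (Fin n) (Fin n) ℂ)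
    (hA : ∀ i, (A i).IsHermitian)
    (F : Set (Fin k → ℝ)) (hF : IsFaceOf (JNR A) F) (hFne : F.Nonempty) :
    ∃ r : ℕ, 1 ≤ r ∧ r ≤ n ∧
      ∃ B : Fin k → Matrix (Fin r) (Fin r) ℂ, (∀ i, (B i).IsHermitian) ∧
        F = JNR B := by
  obtain ⟨r, hr, hrn, V, -, rfl⟩ := stmt17_general A F hF hFne
  exact ⟨r, hr, by simpa using hrn, _, fun i ↦ isHermitian_conjTranspose_mul_mul V (hA i), rfl⟩
end
end
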